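/- There is a universal constant C > 0 with the following property: for every smooth function f : ℝ × ℝ → ℝ that is 2π-periodic in its second variable, vanishes for s outside [0,1], and satisfies |f| ≤ 1, there exists a twice continuously differentiable function u : ℝ × ℝ → ℝ, 2π-periodic in its second variable, such that ∂²u/∂s² + ∂²u/∂θ² = f on all of ℝ × ℝ, |u(s,θ)| ≤ C for all s ≤ 1 and all θ, and |u(s,θ)| ≤ C s for all s > 1 and all θ. -/

import Mathlib

/-- first-order damped ODE on the line -/
lemma ode_half (m : ℝ) (hm : 0 < m) (h : ℝ → ℂ) (hc : Continuous h)
    (hv : ∀ t, t < 0 → h t = 0) :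
    ∃ p : ℝ → ℂ, (∀ s, HasDerivAt p (-(m:ℂ) * p s + h s) s) ∧
      ∀ K : ℝ, (∀ t, ‖h t‖ ≤ K) → ∀ s, ‖p s‖ ≤ K / m := by
  have hcc : Continuous (fun t : ℝ => Complex.exp ((m:ℂ) * t) * h t) := by fun_prop
  refine ⟨fun s => Complex.exp (-(m:ℂ) * s) * ∫ t in (0:ℝ)..s, Complex.exp ((m:ℂ) * t) * h t, ?_, ?_⟩
  · intro s
    have h1 : HasDerivAt (fun s : ℝ => Complex.exp (-(m:ℂ) * s)) (Complex.exp (-(m:ℂ) * s) * (-(m:ℂ) * 1)) s :=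
      ((Complex.ofRealCLM.hasDerivAt (x := s)).const_mul (-(m:ℂ))).cexp
    have h2 := h1.mul (intervalIntegral.integral_hasDerivAt_right (hcc.intervalIntegrable 0 s)
      (hcc.stronglyMeasurableAtFilter _ _) hcc.continuousAt)
    refine h2.congr_deriv ?_
    have : Complex.exp (-(m:ℂ) * s) * Complex.exp ((m:ℂ) * s) = 1 := by
      rw [← Complex.exp_add]; simp
    linear_combination (h s) * this
  · intro K hK s
    have hK0 : 0 ≤ K := (norm_nonneg _).trans (hK 0)
    rcases le_or_gt 0 s with hs | hs
    · have e1 : ‖∫ t in (0:ℝ)..s, Complex.exp ((m:ℂ) * t) * h t‖ ≤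
          ∫ t in (0:ℝ)..s, Real.exp (m * t) * K := by
        apply intervalIntegral.norm_integral_le_of_norm_le hs
        · filter_upwards with t _
          rw [norm_mul, Complex.norm_exp]
          simp only [Complex.re_ofReal_mul, Complex.ofReal_re]
          gcongr
          exact hK t
        · exact Continuous.intervalIntegrable (by fun_prop) _ _
      have e2 : ∫ t in (0:ℝ)..s, Real.exp (m * t) * K = (Real.exp (m * s) * K / m - K / m) := by
        rw [intervalIntegral.integral_eq_sub_of_hasDerivAt (f := fun t => Real.exp (m * t) * K / m)]
        · simp
        · intro t _
          have := ((((hasDerivAt_id t).const_mul m).exp).mul_const K).div_const m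
          refine this.congr_deriv ?_
          simp
          field_simp
        · exact Continuous.intervalIntegrable (by fun_prop) _ _
      rw [norm_mul, Complex.norm_exp]
      have e3 : (-(m:ℂ) * s).re = -(m * s) := by simp
      rw [e3]
      calc _ ≤ Real.exp (-(m*s)) * (Real.exp (m * s) * K / m - K / m) := by
            gcongr; exact e1.trans_eq e2
        _ ≤ Real.exp (-(m*s)) * (Real.exp (m * s) * K / m) := by
            gcongr; simp; positivity
        _ = K / m := by
            rw [Real.exp_neg]; field_simp
    · have : ∫ t in (0:ℝ)..s, Complex.exp ((m:ℂ) * t) * h t = 0 := by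
        rw [intervalIntegral.integral_zero_ae]
        filter_upwards [MeasureTheory.Measure.ae_ne MeasureTheory.volume (0:ℝ)] with t ht0 ht
        rw [Set.uIoc_of_ge hs.le] at ht
        rw [hv t (lt_of_le_of_ne ht.2 ht0)]; simp
      simp only [this, mul_zero, norm_zero]; positivity

lemma ode_full (m : ℝ) (hm : 0 < m) (h : ℝ → ℂ) (hc : Continuous h)
    (hv : ∀ t, t ∉ Set.Icc (0:ℝ) 1 → h t = 0) :
    ∃ g g' : ℝ → ℂ, (∀ s, HasDerivAt g (g' s) s) ∧
      (∀ s, HasDerivAt g' ((m:ℂ)^2 * g s + h s) s) ∧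
      ∀ K : ℝ, (∀ t, ‖h t‖ ≤ K) → ∀ s, m^2 * ‖g s‖ ≤ K ∧ m * ‖g' s‖ ≤ K := by
  obtain ⟨p, hp, hpK⟩ := ode_half m hm h hc (fun t ht => hv t (fun h => absurd h.1 (not_le.2 ht)))
  obtain ⟨q, hq, hqK⟩ := ode_half m hm (fun t => h (1 - t)) (by fun_prop)
    (fun t ht => hv _ (fun h => by have := h.2; linarith))
  have hq' : ∀ s, HasDerivAt (fun s => q (1 - s)) ((m:ℂ) * q (1 - s) - h s) s := by
    intro s
    have := (hq (1 - s)).scomp s ((hasDerivAt_id s).const_sub 1)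
    refine this.congr_deriv ?_
    simp
    ring
  have hm' : (m:ℂ) ≠ 0 := by exact_mod_cast hm.ne'
  refine ⟨fun s => -(1/(2*(m:ℂ))) * (p s + q (1 - s)), fun s => (1/2) * (p s - q (1 - s)), ?_, ?_, ?_⟩
  · intro s
    refine (((hp s).add (hq' s)).const_mul (-(1/(2*(m:ℂ))))).congr_deriv ?_
    field_simp; ring
  · intro s
    refine (((hp s).sub (hq' s)).const_mul (1/2 : ℂ)).congr_deriv ?_
    field_simp; ring
  · intro K hK s
    have a := hpK K hK s
    have b := hqK K (fun t => hK _) (1 - s)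
    rw [le_div_iff₀ hm] at a b
    have c := norm_add_le (p s) (q (1 - s))
    have d := norm_sub_le (p s) (q (1 - s))
    simp only [norm_mul, norm_neg, norm_div, norm_one, Complex.norm_ofNat, Complex.norm_real, Real.norm_eq_abs, abs_of_pos hm]
    constructor
    · have : m ^ 2 * (1 / (2 * m) * ‖p s + q (1 - s)‖) = m / 2 * ‖p s + q (1 - s)‖ := by field_simp
      rw [this]; nlinarith
    · nlinarith

lemma ode_int (n : ℤ) (h : ℝ → ℂ) (hc : Continuous h)
    (hv : ∀ t, t ∉ Set.Icc (0:ℝ) 1 → h t = 0) (hn : n = 0 → ∀ t, h t = 0) :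
    ∃ g g' : ℝ → ℂ, (∀ s, HasDerivAt g (g' s) s) ∧
      (∀ s, HasDerivAt g' ((n:ℂ)^2 * g s + h s) s) ∧ 
      (∀ K : ℝ, (∀ t, ‖h t‖ ≤ K) → ∀ s, |(n:ℝ)|^2 * ‖g s‖ ≤ K ∧ |(n:ℝ)| * ‖g' s‖ ≤ K ∧ 
        |(n:ℝ)| * ‖g s‖ ≤ K ∧ ‖g s‖ ≤ K ∧ ‖g' s‖ ≤ K ∧ ‖(n:ℂ)^2 * g s + h s‖ ≤ 2 * K) ∧
      (n = 0 → ∀ s, g s = 0) := by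
  by_cases h0 : n = 0
  · refine ⟨0, 0, ?_, ?_, ?_, ?_⟩
    · intro s; exact hasDerivAt_const s 0
    · intro s; simp only [hn h0, Pi.zero_apply, mul_zero, add_zero]; exact hasDerivAt_const s 0
    · intro K hK s
      have hK0 : 0 ≤ K := (norm_nonneg _).trans (hK 0)
      simp [hn h0, hK0]
    · simp
  · have h1 : (1:ℝ) ≤ |(n:ℝ)| := by exact_mod_cast Int.one_le_abs h0
    obtain ⟨g, g', hg, hg', hK⟩ := ode_full |(n:ℝ)| (by linarith) h hc hv
    have hsq : ((|(n:ℝ)| : ℝ) : ℂ)^2 = (n:ℂ)^2 := by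
      rw [← Complex.ofReal_pow, sq_abs]; simp
    rw [hsq] at hg'
    refine ⟨g, g', hg, hg', ?_, fun h => absurd h h0⟩
    intro K hb s
    obtain ⟨a, b⟩ := hK K hb s
    have n1 := norm_nonneg (g s)
    have n2 := norm_nonneg (g' s)
    have c : |(n:ℝ)| * ‖g s‖ ≤ K := by
      refine le_trans ?_ a
      rw [pow_two, mul_assoc]; exact le_mul_of_one_le_left (by positivity) h1
    refine ⟨a, b, c, ?_, ?_, ?_⟩
    · nlinarith
    · nlinarith
    · have := norm_add_le ((n:ℂ)^2 * g s) (h s)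
      have e : ‖(n:ℂ)^2 * g s‖ = |(n:ℝ)|^2 * ‖g s‖ := by
        rw [← hsq]; simp
      linarith [hb s]

lemma ode_zero (h : ℝ → ℂ) (hc : Continuous h)
    (hv : ∀ t, t ∉ Set.Icc (0:ℝ) 1 → h t = 0) (hb : ∀ t, ‖h t‖ ≤ 1) :
    ∃ g g' : ℝ → ℂ, (∀ s, HasDerivAt g (g' s) s) ∧
      (∀ s, HasDerivAt g' (h s) s) ∧ (∀ s, s ≤ 1 → ‖g s‖ ≤ 1) ∧ (∀ s, 1 < s → ‖g s‖ ≤ s) := by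
  let A : ℝ → ℂ := fun s => ∫ t in (0:ℝ)..s, h t
  have hA : ∀ s, HasDerivAt A (h s) s := fun s =>
    intervalIntegral.integral_hasDerivAt_right (hc.intervalIntegrable 0 s)
      (hc.stronglyMeasurableAtFilter _ _) hc.continuousAt
  have hAc : Continuous A := continuous_iff_continuousAt.2 fun s => (hA s).continuousAt
  have hA0 : ∀ s, s ≤ 0 → A s = 0 := by
    intro s hs
    apply intervalIntegral.integral_zero_ae
    filter_upwards [MeasureTheory.Measure.ae_ne MeasureTheory.volume (0:ℝ)] with t ht0 ht
    rw [Set.uIoc_of_ge hs] at ht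
    exact hv t (fun h => ht0 (le_antisymm ht.2 h.1))
  have hA1 : ∀ s, 0 ≤ s → s ≤ 1 → ‖A s‖ ≤ 1 := by
    intro s hs hs1
    have := intervalIntegral.norm_integral_le_of_norm_le_const (a := 0) (b := s) (C := 1) (f := h) (fun t _ => hb t)
    rw [sub_zero, abs_of_nonneg hs] at this
    exact this.trans (by linarith)
  have hA2 : ∀ s, ‖A s‖ ≤ 1 := by
    intro s
    rcases le_total s 0 with h0 | h0
    · rw [hA0 s h0]; simp
    rcases le_total s 1 with h1 | h1
    · exact hA1 s h0 h1
    have : A s = A 1 := by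
      have e : A s = A 1 + ∫ t in (1:ℝ)..s, h t := 
        (intervalIntegral.integral_add_adjacent_intervals (hc.intervalIntegrable _ _) (hc.intervalIntegrable _ _)).symm
      rw [e, intervalIntegral.integral_zero_ae, add_zero]
      filter_upwards with t ht
      rw [Set.uIoc_of_le h1] at ht
      exact hv t (fun h => absurd h.2 (not_le.2 ht.1))
    rw [this]; exact hA1 1 zero_le_one le_rfl
  have hB : ∀ s, 0 ≤ s → ‖∫ t in (0:ℝ)..s, A t‖ ≤ s := by
    intro s hs
    have := intervalIntegral.norm_integral_le_of_norm_le_const (a := 0) (b := s) (C := 1) (f := A) (fun t _ => hA2 t)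
    rwa [sub_zero, abs_of_nonneg hs, one_mul] at this
  refine ⟨fun s => ∫ t in (0:ℝ)..s, A t, A, fun s => 
    intervalIntegral.integral_hasDerivAt_right (hAc.intervalIntegrable 0 s)
      (hAc.stronglyMeasurableAtFilter _ _) hAc.continuousAt, hA, ?_, fun s hs => hB s (by linarith)⟩
  intro s hs
  rcases le_total s 0 with h0 | h0
  · have : ∫ t in (0:ℝ)..s, A t = 0 := by
      apply intervalIntegral.integral_zero_ae
      filter_upwards with t ht
      rw [Set.uIoc_of_ge h0] at ht
      exact hA0 t ht.2
    simp [this]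
  · exact (hB s h0).trans hs

/-- Fourier coefficient of a `2π`-periodic function. -/
noncomputable def fc (n : ℤ) (φ : ℝ → ℂ) : ℂ :=
  (1 / (2 * Real.pi) : ℝ) • ∫ x in (0:ℝ)..(2 * Real.pi), Complex.exp (-(Complex.I * n * x)) * φ x

lemma fc_eq_on (n : ℤ) (φ : ℝ → ℂ) : fc n φ = fourierCoeffOn Real.two_pi_pos φ n := by
  rw [fourierCoeffOn_eq_integral, fc]
  have hp : (Real.pi : ℂ) ≠ 0 := by exact_mod_cast Real.pi_ne_zero
  simp only [sub_zero]
  congr 1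
  apply intervalIntegral.integral_congr
  intro x _
  simp only [fourier_coe_apply, smul_eq_mul]
  congr 2
  push_cast
  field_simp
  ring_nf

lemma fc_hasSum (φ : ℝ → ℂ) (hc : Continuous φ) (hp : ∀ x, φ (x + 2 * Real.pi) = φ x)
    (hs : Summable (fun n => fc n φ)) (x : ℝ) :
    HasSum (fun n : ℤ => fc n φ * Complex.exp (Complex.I * n * x)) (φ x) := by
  have : Fact (0 < 2 * Real.pi) := ⟨Real.two_pi_pos⟩
  have hpi : (Real.pi : ℂ) ≠ 0 := by exact_mod_cast Real.pi_ne_zero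
  have hper : Function.Periodic φ (2 * Real.pi) := hp
  let Φ : C(AddCircle (2 * Real.pi), ℂ) := ⟨hper.lift, hc.quotient_liftOn' _⟩
  have hcoef : ∀ n, fourierCoeff Φ n = fc n φ := by
    intro n
    rw [fourierCoeff_eq_intervalIntegral _ _ 0, fc, zero_add]
    congr 1
    apply intervalIntegral.integral_congr
    intro x _
    simp only [fourier_coe_apply, smul_eq_mul]
    congr 2
    push_cast
    field_simp
  have hs' : Summable (fourierCoeff Φ) := by
    convert hs using 1
    funext n; exact hcoef n
  have := has_pointwise_sum_fourier_series_of_summable hs' (x : AddCircle (2 * Real.pi))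
  have hx : Φ (x : AddCircle (2 * Real.pi)) = φ x := rfl
  rw [hx] at this
  convert this using 1
  funext n
  rw [hcoef, fourier_coe_apply, smul_eq_mul]
  congr 2
  push_cast
  field_simp

lemma fc_deriv (φ φ' : ℝ → ℂ) (hd : ∀ x, HasDerivAt φ (φ' x) x) (hc : Continuous φ')
    (hp : φ (2 * Real.pi) = φ 0) (n : ℤ) (hn : n ≠ 0) :
    fc n φ = fc n φ' / (Complex.I * n) := by
  have hpi : (Real.pi : ℂ) ≠ 0 := by exact_mod_cast Real.pi_ne_zero
  have hn' : (n : ℂ) ≠ 0 := by exact_mod_cast hn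
  rw [fc_eq_on, fc_eq_on, fourierCoeffOn_of_hasDerivAt Real.two_pi_pos hn (fun x _ => hd x)
    (hc.intervalIntegrable _ _), hp]
  push_cast
  field_simp [Complex.I_ne_zero]
  ring

lemma fc_norm (φ : ℝ → ℂ) (K : ℝ) (hK : ∀ x ∈ Set.Icc 0 (2 * Real.pi), ‖φ x‖ ≤ K) (n : ℤ) : ‖fc n φ‖ ≤ K := by
  have h2 := Real.two_pi_pos
  have : ‖∫ x in (0:ℝ)..(2 * Real.pi), Complex.exp (-(Complex.I * n * x)) * φ x‖ ≤ K * |2 * Real.pi - 0| := by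
    apply intervalIntegral.norm_integral_le_of_norm_le_const
    intro x hx
    rw [Set.uIoc_of_le h2.le] at hx
    rw [norm_mul, Complex.norm_exp]
    simpa using hK x ⟨hx.1.le, hx.2⟩
  rw [fc, norm_smul, Real.norm_of_nonneg (by positivity)]
  rw [sub_zero, abs_of_pos h2] at this
  calc _ ≤ 1 / (2 * Real.pi) * (K * (2 * Real.pi)) := by gcongr
    _ = K := by field_simp

lemma fc_cont (F : ℝ × ℝ → ℂ) (hF : Continuous F) (n : ℤ) : Continuous (fun t => fc n (fun x => F (t, x))) := by
  unfold fc
  refine Continuous.fun_const_smul ?_ _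
  apply intervalIntegral.continuous_parametric_intervalIntegral_of_continuous'
  simp only [Function.uncurry_def]
  fun_prop

lemma fourier_data (f : ℝ × ℝ → ℝ) (hf : ContDiff ℝ (⊤ : ℕ∞) f)
    (hper : ∀ s θ : ℝ, f (s, θ + 2 * Real.pi) = f (s, θ))
    (hsupp : ∀ s θ : ℝ, s ∉ Set.Icc (0 : ℝ) 1 → f (s, θ) = 0)
    (hb : ∀ s θ : ℝ, |f (s, θ)| ≤ 1) :
    ∃ (c : ℤ → ℝ → ℂ) (M : ℝ), (∀ n, Continuous (c n)) ∧ (∀ n t, t ∉ Set.Icc (0:ℝ) 1 → c n t = 0) ∧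
      (∀ n t, ‖c n t‖ ≤ 1) ∧ (∀ n : ℤ, n ≠ 0 → ∀ t, ‖c n t‖ ≤ M / (n:ℝ)^2) ∧
      (∀ t θ : ℝ, HasSum (fun n : ℤ => c n t * Complex.exp (Complex.I * n * θ)) (f (t, θ) : ℂ)) := by
  have hd0 : Differentiable ℝ f := hf.differentiable (by simp)
  let f1 : ℝ × ℝ → ℝ := fun p => fderiv ℝ f p (0, 1)
  have hf1 : ContDiff ℝ (⊤ : ℕ∞) f1 := (hf.fderiv_right (m := (⊤ : ℕ∞)) (by simp)).clm_apply contDiff_const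
  have hd1 : Differentiable ℝ f1 := hf1.differentiable (by simp)
  let f2 : ℝ × ℝ → ℝ := fun p => fderiv ℝ f1 p (0, 1)
  have hf2 : ContDiff ℝ (⊤ : ℕ∞) f2 := (hf1.fderiv_right (m := (⊤ : ℕ∞)) (by simp)).clm_apply contDiff_const
  have key : ∀ g : ℝ × ℝ → ℝ, Differentiable ℝ g → ∀ t x, HasDerivAt (fun x => g (t, x)) (fderiv ℝ g (t, x) (0, 1)) x := by
    intro g hg t x
    exact (hg (t, x)).hasFDerivAt.comp_hasDerivAt x ((hasDerivAt_const x t).prodMk (hasDerivAt_id x))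
  have hper1 : ∀ t x, f1 (t, x + 2 * Real.pi) = f1 (t, x) := by
    intro t x
    have a := (key f hd0 t (x + 2 * Real.pi)).comp_add_const x (2 * Real.pi)
    simp only [hper] at a
    exact a.unique (key f hd0 t x)
  obtain ⟨M, hM⟩ := ((isCompact_Icc (a := (0:ℝ)) (b := 1)).prod (isCompact_Icc (a := (0:ℝ)) (b := 2 * Real.pi))).exists_bound_of_continuousOn hf2.continuous.continuousOn
  have hM0 : 0 ≤ M := (norm_nonneg _).trans (hM (0, 0) ⟨by simp, by simp [Real.pi_pos.le]⟩)
  have hz : ∀ n t, t ∉ Set.Icc (0:ℝ) 1 → fc n (fun x => (f (t, x) : ℂ)) = 0 := by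
    intro n t ht
    simp [fc, hsupp t _ ht]
  have hdec : ∀ n : ℤ, n ≠ 0 → ∀ t, ‖fc n (fun x => (f (t, x) : ℂ))‖ ≤ M / (n:ℝ)^2 := by
    intro n hn t
    by_cases ht : t ∈ Set.Icc (0:ℝ) 1
    · have c1 := hf1.continuous
      have c2 := hf2.continuous
      rw [fc_deriv _ (fun x => (f1 (t, x) : ℂ)) (fun x => (key f hd0 t x).ofReal_comp) (by fun_prop)
        (by have := hper t 0; rw [zero_add] at this; rw [this]) n hn,
        fc_deriv _ (fun x => (f2 (t, x) : ℂ)) (fun x => (key f1 hd1 t x).ofReal_comp) (by fun_prop)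
        (by have := hper1 t 0; rw [zero_add] at this; rw [this]) n hn]
      have := fc_norm (fun x => (f2 (t, x) : ℂ)) M (fun x hx => by
        rw [Complex.norm_real]; exact hM (t, x) ⟨ht, hx⟩) n
      rw [norm_div, norm_div, norm_mul, Complex.norm_I, one_mul, div_div, Complex.norm_intCast, ← sq, sq_abs]
      gcongr
    · rw [hz n t ht, norm_zero]; positivity
  have hc := hf.continuous
  refine ⟨fun n t => fc n (fun x => (f (t, x) : ℂ)), M, fun n => fc_cont (fun p => (f p : ℂ)) (by fun_prop) n, hz,
    fun n t => fc_norm _ 1 (fun x _ => by simpa using hb t x) n, hdec, ?_⟩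
  intro t θ
  apply fc_hasSum (fun x => (f (t, x) : ℂ)) (by fun_prop) (fun x => by rw [hper])
  have hS : Summable (fun n : ℤ => M / (n:ℝ)^2) := by
    simpa [div_eq_mul_inv] using (Real.summable_one_div_int_pow.2 one_lt_two).mul_left M
  refine Summable.of_norm_bounded_eventually hS ?_
  have : ∀ᶠ n : ℤ in Filter.cofinite, n ≠ 0 := by
    rw [Filter.eventually_cofinite]; simp
  filter_upwards [this] with n hn using hdec n hn t

lemma c2_of (g g' g'' : ℝ → ℂ) (h1 : ∀ s, HasDerivAt g (g' s) s) (h2 : ∀ s, HasDerivAt g' (g'' s) s)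
    (hc : Continuous g'') : ContDiff ℝ 2 g ∧ iteratedDeriv 1 g = g' ∧ iteratedDeriv 2 g = g'' := by
  have d1 : deriv g = g' := funext fun s => (h1 s).deriv
  have d2 : deriv g' = g'' := funext fun s => (h2 s).deriv
  refine ⟨?_, ?_, ?_⟩
  · have e : (2 : WithTop ℕ∞) = 1 + 1 := by norm_num
    rw [e, contDiff_succ_iff_deriv]
    refine ⟨fun s => (h1 s).differentiableAt, by simp, ?_⟩
    rw [d1, contDiff_one_iff_deriv, d2]
    exact ⟨fun s => (h2 s).differentiableAt, hc⟩
  · rw [iteratedDeriv_one, d1]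
  · rw [show (2:ℕ) = 1 + 1 by rfl, iteratedDeriv_succ, iteratedDeriv_one, d1, d2]

lemma prod_bound (a b : ℝ → ℂ) (ha : ContDiff ℝ 2 a) (hb : ContDiff ℝ 2 b) (K : ℝ) 
    (hK : ∀ i j : ℕ, i + j ≤ 2 → ∀ s θ, ‖iteratedDeriv i a s‖ * ‖iteratedDeriv j b θ‖ ≤ 2 * K)
    (k : ℕ) (hk : k ≤ 2) (p : ℝ × ℝ) :
    ‖iteratedFDeriv ℝ k (fun p : ℝ × ℝ => a p.1 * b p.2) p‖ ≤ 8 * K := by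
  have hK0 : 0 ≤ 2 * K := le_trans (by positivity) (hK 0 0 (by norm_num) 0 0)
  have hkk : (k : WithTop ℕ∞) ≤ 2 := by exact_mod_cast hk
  have h1 := norm_iteratedFDeriv_mul_le (𝕜 := ℝ) (ha.comp (contDiff_fst (E := ℝ) (F := ℝ))) (hb.comp (contDiff_snd (E := ℝ) (F := ℝ))) p hkk
  refine h1.trans ?_
  have key : ∀ (L : ℝ × ℝ →L[ℝ] ℝ), ‖L‖ ≤ 1 → ∀ (c : ℝ → ℂ), ContDiff ℝ 2 c → ∀ i : ℕ, i ≤ 2 → 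
      ‖iteratedFDeriv ℝ i (c ∘ L) p‖ ≤ ‖iteratedDeriv i c (L p)‖ := by
    intro L hL c hc i hi
    rw [L.iteratedFDeriv_comp_right hc p (by exact_mod_cast hi)]
    refine (ContinuousMultilinearMap.norm_compContinuousLinearMap_le _ _).trans ?_
    rw [norm_iteratedFDeriv_eq_norm_iteratedDeriv]
    refine mul_le_of_le_one_right (norm_nonneg _) ?_
    exact Finset.prod_le_one (fun _ _ => norm_nonneg _) (fun _ _ => hL)
  have : ∀ i ∈ Finset.range (k + 1), (k.choose i : ℝ) * ‖iteratedFDeriv ℝ i (a ∘ Prod.fst) p‖ * ‖iteratedFDeriv ℝ (k - i) (b ∘ Prod.snd) p‖ ≤ (k.choose i : ℝ) * (2 * K) := by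
    intro i hi
    have hi' : i ≤ k := Nat.lt_succ_iff.1 (Finset.mem_range.1 hi)
    rw [mul_assoc]
    refine mul_le_mul_of_nonneg_left ?_ (by positivity)
    refine le_trans ?_ (hK i (k - i) (by omega) p.1 p.2)
    gcongr
    · exact key (ContinuousLinearMap.fst ℝ ℝ ℝ) (ContinuousLinearMap.norm_fst_le ..) a ha i (by omega)
    · exact key (ContinuousLinearMap.snd ℝ ℝ ℝ) (ContinuousLinearMap.norm_snd_le ..) b hb (k - i) (by omega)
  refine (Finset.sum_le_sum this).trans ?_
  rw [← Finset.sum_mul]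
  have hs : ∑ i ∈ Finset.range (k + 1), (k.choose i : ℝ) = 2 ^ k := by exact_mod_cast Nat.sum_range_choose k
  rw [hs]
  have : (2:ℝ) ^ k ≤ 2 ^ 2 := pow_le_pow_right₀ (by norm_num) hk
  nlinarith

lemma e_deriv (n : ℤ) (c : ℂ) (θ : ℝ) : HasDerivAt (fun θ : ℝ => c * Complex.exp (Complex.I * n * θ))
    ((Complex.I * n * c) * Complex.exp (Complex.I * n * θ)) θ := by
  refine ((((Complex.ofRealCLM.hasDerivAt (x := θ)).const_mul (Complex.I * n)).cexp).const_mul c).congr_deriv ?_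
  simp
  ring

lemma e_norm (n : ℤ) (θ : ℝ) : ‖Complex.exp (Complex.I * n * θ)‖ = 1 := by
  rw [Complex.norm_exp]; simp

lemma series (g g' h : ℤ → ℝ → ℂ) (K : ℤ → ℝ) (hKs : Summable K)
    (hg : ∀ n s, HasDerivAt (g n) (g' n s) s)
    (hg' : ∀ (n : ℤ) s, HasDerivAt (g' n) ((n:ℂ)^2 * g n s + h n s) s)
    (hh : ∀ n, Continuous (h n))
    (hK : ∀ (n : ℤ) s, |(n:ℝ)|^2 * ‖g n s‖ ≤ K n ∧ |(n:ℝ)| * ‖g' n s‖ ≤ K n ∧ 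
        |(n:ℝ)| * ‖g n s‖ ≤ K n ∧ ‖g n s‖ ≤ K n ∧ ‖g' n s‖ ≤ K n ∧ ‖(n:ℂ)^2 * g n s + h n s‖ ≤ 2 * K n) :
    ∃ U Us Ut Utt Uss : ℝ → ℝ → ℂ, (∀ s θ, U s θ = ∑' n, g n s * Complex.exp (Complex.I * n * θ)) ∧
      ContDiff ℝ 2 (fun p : ℝ × ℝ => U p.1 p.2) ∧
      (∀ s θ, HasDerivAt (fun s => U s θ) (Us s θ) s) ∧ (∀ s θ, HasDerivAt (fun s => Us s θ) (Uss s θ) s) ∧ 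
      (∀ s θ, HasDerivAt (fun θ => U s θ) (Ut s θ) θ) ∧ (∀ s θ, HasDerivAt (fun θ => Ut s θ) (Utt s θ) θ) ∧
      (∀ s θ, Uss s θ + Utt s θ = ∑' n, h n s * Complex.exp (Complex.I * n * θ)) := by
  have hK0 : ∀ n, 0 ≤ K n := fun n => (norm_nonneg _).trans (hK n 0).2.2.2.1
  have hKs2 : Summable (fun n => 2 * K n) := hKs.mul_left 2
  have b0 : ∀ (n : ℤ) s (θ : ℝ), ‖g n s * Complex.exp (Complex.I * n * θ)‖ ≤ 2 * K n := by
    intro n s θ; rw [norm_mul, e_norm, mul_one]; linarith [(hK n s).2.2.2.1, hK0 n]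
  have b1 : ∀ (n : ℤ) s (θ : ℝ), ‖g' n s * Complex.exp (Complex.I * n * θ)‖ ≤ 2 * K n := by
    intro n s θ; rw [norm_mul, e_norm, mul_one]; linarith [(hK n s).2.2.2.2.1, hK0 n]
  have b2 : ∀ (n : ℤ) s (θ : ℝ), ‖((n:ℂ)^2 * g n s + h n s) * Complex.exp (Complex.I * n * θ)‖ ≤ 2 * K n := by
    intro n s θ; rw [norm_mul, e_norm, mul_one]; linarith [(hK n s).2.2.2.2.2, hK0 n]
  have b3 : ∀ (n : ℤ) s (θ : ℝ), ‖(Complex.I * n * g n s) * Complex.exp (Complex.I * n * θ)‖ ≤ 2 * K n := by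
    intro n s θ; rw [norm_mul, e_norm, mul_one, norm_mul, norm_mul, Complex.norm_I, one_mul, Complex.norm_intCast]
    linarith [(hK n s).2.2.1, hK0 n]
  have b4 : ∀ (n : ℤ) s (θ : ℝ), ‖(Complex.I * n * (Complex.I * n * g n s)) * Complex.exp (Complex.I * n * θ)‖ ≤ 2 * K n := by
    intro n s θ; rw [norm_mul, e_norm, mul_one, norm_mul, norm_mul, norm_mul, norm_mul, Complex.norm_I, one_mul, Complex.norm_intCast, ← mul_assoc, ← sq]
    linarith [(hK n s).1, hK0 n]
  refine ⟨fun s θ => ∑' n, g n s * Complex.exp (Complex.I * n * θ),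
    fun s θ => ∑' n, g' n s * Complex.exp (Complex.I * n * θ),
    fun s θ => ∑' n : ℤ, (Complex.I * n * g n s) * Complex.exp (Complex.I * n * θ),
    fun s θ => ∑' n : ℤ, (Complex.I * n * (Complex.I * n * g n s)) * Complex.exp (Complex.I * n * θ),
    fun s θ => ∑' n : ℤ, ((n:ℂ)^2 * g n s + h n s) * Complex.exp (Complex.I * n * θ),
    fun _ _ => rfl, ?_, ?_, ?_, ?_, ?_, ?_⟩
  · have hgc : ∀ n, Continuous (g n) := fun n => continuous_iff_continuousAt.2 fun s => (hg n s).continuousAt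
    have A := fun n => c2_of (g n) (g' n) _ (hg n) (hg' n) (by have := hgc n; have := hh n; fun_prop)
    have B := fun n : ℤ => c2_of (fun θ : ℝ => Complex.exp (Complex.I * n * θ)) 
      (fun θ : ℝ => (Complex.I * n) * Complex.exp (Complex.I * n * θ)) 
      (fun θ : ℝ => (Complex.I * n * (Complex.I * n)) * Complex.exp (Complex.I * n * θ)) 
      (fun θ => by simpa using e_deriv n 1 θ) (fun θ => e_deriv n _ θ) (by fun_prop)
    refine contDiff_tsum (N := 2) (v := fun _ n => 8 * K n) (fun n => ?_) (fun _ _ => hKs.mul_left 8) ?_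
    · exact ((A n).1.comp contDiff_fst).mul ((B n).1.comp contDiff_snd)
    · intro k n p hk
      refine prod_bound (g n) (fun θ : ℝ => Complex.exp (Complex.I * n * θ)) (A n).1 (B n).1 (K n) ?_ k (by exact_mod_cast hk) p
      intro i j hij s θ
      have H := hK n s
      have H0 := hK0 n
      have hi : i ≤ 2 := by omega
      have hj : j ≤ 2 := by omega
      interval_cases i <;> interval_cases j <;> first | omega | skip
      all_goals simp only [iteratedDeriv_zero, (A n).2.1, (A n).2.2, (B n).2.1, (B n).2.2, norm_mul, e_norm, mul_one, Complex.norm_I, one_mul, Complex.norm_intCast]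
      · linarith
      · linarith
      · linarith
      · linarith
      · linarith
      · linarith
  · intro s θ
    exact hasDerivAt_tsum hKs2 (fun n s => (hg n s).mul_const _) (fun n s => b1 n s θ) 
      (Summable.of_norm_bounded hKs2 (fun n => b0 n 0 θ)) s
  · intro s θ
    exact hasDerivAt_tsum hKs2 (fun n s => (hg' n s).mul_const _) (fun n s => b2 n s θ) 
      (Summable.of_norm_bounded hKs2 (fun n => b1 n 0 θ)) s
  · intro s θ
    exact hasDerivAt_tsum hKs2 (fun n θ => e_deriv n _ θ) (fun n θ => b3 n s θ) 
      (Summable.of_norm_bounded hKs2 (fun n => b0 n s 0)) θ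
  · intro s θ
    exact hasDerivAt_tsum hKs2 (fun n θ => e_deriv n _ θ) (fun n θ => b4 n s θ) 
      (Summable.of_norm_bounded hKs2 (fun n => b3 n s 0)) θ
  · intro s θ
    simp only
    rw [← (Summable.of_norm_bounded hKs2 (fun n => b2 n s θ)).tsum_add (Summable.of_norm_bounded hKs2 (fun n => b4 n s θ))]
    apply tsum_congr
    intro n
    linear_combination ((n:ℂ)^2 * g n s * Complex.exp (Complex.I * n * θ)) * Complex.I_sq

/-- Poisson equation on the infinite cylinder: for smooth `2π`-periodic-in-`θ` data `f`
supported in `{0 ≤ s ≤ 1}` with `|f| ≤ 1`, there is a solution `u` of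
`∂²u/∂s² + ∂²u/∂θ² = f` with `|u| ≤ C` for `s ≤ 1` and `|u| ≤ C s` for `s > 1`,
with `C` a universal constant. -/
theorem poisson_infinite_cylinder :
    ∃ C : ℝ, 0 < C ∧
      ∀ f : ℝ × ℝ → ℝ,
        ContDiff ℝ (⊤ : ℕ∞) f →
        (∀ s θ : ℝ, f (s, θ + 2 * Real.pi) = f (s, θ)) →
        (∀ s θ : ℝ, s ∉ Set.Icc (0 : ℝ) 1 → f (s, θ) = 0) →
        (∀ s θ : ℝ, |f (s, θ)| ≤ 1) →
        ∃ u : ℝ × ℝ → ℝ,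
          ContDiff ℝ 2 u ∧
          (∀ s θ : ℝ, u (s, θ + 2 * Real.pi) = u (s, θ)) ∧
          (∀ s θ : ℝ,
            deriv (fun s' => deriv (fun s'' => u (s'', θ)) s') s +
              deriv (fun θ' => deriv (fun θ'' => u (s, θ'')) θ') θ = f (s, θ)) ∧
          (∀ s θ : ℝ, s ≤ 1 → |u (s, θ)| ≤ C) ∧
          (∀ s θ : ℝ, 1 < s → |u (s, θ)| ≤ C * s) := by
  have hS : Summable (fun n : ℤ => 1 / (n:ℝ)^2) := Real.summable_one_div_int_pow.2 one_lt_two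
  have hS0 : 0 ≤ ∑' n : ℤ, 1 / (n:ℝ)^2 := tsum_nonneg fun n => by positivity
  refine ⟨1 + ∑' n : ℤ, 1 / (n:ℝ)^2, by linarith, ?_⟩
  intro f hf hper hsupp hb
  obtain ⟨c, M, hcc, hcs, hc1, hcM, hcsum⟩ := fourier_data f hf hper hsupp hb
  obtain ⟨g0, g0', hg0, hg0', hb1, hb2⟩ := ode_zero (c 0) (hcc 0) (hcs 0) (hc1 0)
  let h : ℤ → ℝ → ℂ := fun n t => if n = 0 then 0 else c n t
  have hhc : ∀ n, Continuous (h n) := by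
    intro n
    by_cases hn : n = 0
    · simp only [h, hn, if_true]; exact continuous_const
    · simp only [h, hn, if_false]; exact hcc n
  have hhs : ∀ n t, t ∉ Set.Icc (0:ℝ) 1 → h n t = 0 := by
    intro n t ht
    simp only [h]; split_ifs
    · rfl
    · exact hcs n t ht
  have hh1 : ∀ n t, ‖h n t‖ ≤ 1 := by
    intro n t
    simp only [h]; split_ifs
    · simp
    · exact hc1 n t
  have hhM : ∀ n t, ‖h n t‖ ≤ M / (n:ℝ)^2 := by
    intro n t
    simp only [h]; split_ifs with hn
    · simp [hn]
    · exact hcM n hn t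
  have hex := fun n => ode_int n (h n) (hhc n) (hhs n) (fun hn t => by simp [h, hn])
  choose g g' hg hg' hgK hgz using hex
  have hgb : ∀ n s, ‖g n s‖ ≤ 1 / (n:ℝ)^2 := by
    intro n s
    by_cases hn : n = 0
    · rw [hgz n hn]; simp [hn]
    · have := (hgK n 1 (hh1 n) s).1
      have hn' : (0:ℝ) < (n:ℝ)^2 := by positivity
      rw [sq_abs] at this
      rw [le_div_iff₀ hn', mul_comm]; exact this
  have hKs : Summable (fun n : ℤ => M / (n:ℝ)^2) := by
    simpa [div_eq_mul_inv] using hS.mul_left M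
  obtain ⟨U, Us, Ut, Utt, Uss, hU, hUc, dUs, dUss, dUt, dUtt, heq⟩ :=
    series g g' h (fun n => M / (n:ℝ)^2) hKs hg hg' hhc (fun n s => hgK n _ (hhM n) s)
  have hUb : ∀ s θ, ‖U s θ‖ ≤ ∑' n : ℤ, 1 / (n:ℝ)^2 := by
    intro s θ
    rw [hU]
    refine tsum_of_norm_bounded hS.hasSum (fun n => ?_)
    rw [norm_mul, e_norm, mul_one]; exact hgb n s
  have hsum : ∀ s θ, c 0 s + (Uss s θ + Utt s θ) = f (s, θ) := by
    intro s θ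
    rw [heq, ← (hcsum s θ).tsum_eq, (hcsum s θ).summable.tsum_eq_add_tsum_ite 0]
    simp [h]
  have hre : ∀ {v : ℝ → ℂ} {v' : ℂ} {x : ℝ}, HasDerivAt v v' x → HasDerivAt (fun y => (v y).re) v'.re x :=
    fun hv => Complex.reCLM.hasFDerivAt.comp_hasDerivAt _ hv
  refine ⟨fun p => (g0 p.1 + U p.1 p.2).re, ?_, ?_, ?_, ?_, ?_⟩
  · have := (c2_of g0 g0' (c 0) hg0 hg0' (hcc 0)).1
    exact Complex.reCLM.contDiff.comp ((this.comp contDiff_fst).add hUc)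
  · intro s θ
    simp only [hU]
    congr 2
    apply tsum_congr
    intro n
    congr 1
    rw [Complex.exp_eq_exp_iff_exists_int]
    exact ⟨n, by push_cast; ring⟩
  · intro s θ
    have e1 : (fun s' => deriv (fun s'' => (g0 s'' + U s'' θ).re) s') = fun s' => (g0' s' + Us s' θ).re :=
      funext fun s' => (hre ((hg0 s').add (dUs s' θ))).deriv
    have e2 : (fun θ' => deriv (fun θ'' => (g0 s + U s θ'').re) θ') = fun θ' => (Ut s θ').re :=
      funext fun θ' => (hre ((dUt s θ').const_add (g0 s))).deriv
    simp only [e1, e2]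
    have e3 := (hre ((hg0' s).add (dUss s θ))).deriv
    have e4 := (hre (dUtt s θ)).deriv
    simp only [Pi.add_apply] at e3
    rw [e3, e4, ← Complex.add_re, add_assoc, hsum, Complex.ofReal_re]
  · intro s θ hs
    refine (Complex.abs_re_le_norm _).trans ((norm_add_le _ _).trans ?_)
    exact add_le_add (hb1 s hs) (hUb s θ)
  · intro s θ hs
    refine (Complex.abs_re_le_norm _).trans ((norm_add_le _ _).trans ?_)
    have := add_le_add (hb2 s hs) (hUb s θ)
    dsimp only
    nlinarith
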